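/- Monotonicity of E_{x,p} in β₁ at fixed φ: fix φ ∈ [0.525245, 0.619063], and for integers p ≥ 1 and x ≥ 2p define E_{x,p}(β₁) = (U/V)^{x−2p}·(1 − V^{−p}) with U = U(φ, β₁), V = V(φ, β₁), on the interval I_φ = (2 − 3φ, 3(1 − φ)/2) of β₁ for which β₃ > 0 and β₂ > 0. Then: (i) for all integers p ≥ 1 and x ≥ 2p + 2, E_{x,p} is strictly increasing on I_φ; (ii) setting β₁* = √3 − 3(√3 − 1)·φ, the function E_{3,1}(β₁) = 27(1 − φ)·β₂·β₃²/(β₁ + 6φ − 3)⁴ is strictly increasing on I_φ ∩ (−∞, β₁*] and strictly decreasing on I_φ ∩ [β₁*, +∞); consequently, for all p ≥ 1 and x = 2p + 1, E_{x,p} is strictly increasing on I_φ ∩ (−∞, β₁*]. -/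

import Mathlib

/-- `U(φ, β₁) = 9(1−φ)β₃/(Y β₂)` where `β₂ = 3(1−φ) − 2β₁`, `β₃ = β₁ − 2 + 3φ`,
`Y = 3φ − β₁`. -/
noncomputable def Ufun (φ β₁ : ℝ) : ℝ :=
  9 * (1 - φ) * (β₁ - 2 + 3 * φ) / ((3 * φ - β₁) * (3 * (1 - φ) - 2 * β₁))

/-- `V(φ, β₁) = 1 + β₂²/(3 Y β₃)`. -/
noncomputable def Vfun (φ β₁ : ℝ) : ℝ :=
  1 + (3 * (1 - φ) - 2 * β₁) ^ 2 / (3 * (3 * φ - β₁) * (β₁ - 2 + 3 * φ))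

/-- The constraint polygon `D` for the pair `(φ, β₁)`. -/
def Dset : Set (ℝ × ℝ) :=
  {q | 0.525245 ≤ q.1 ∧ q.1 ≤ 0.619063 ∧ 0.33018 ≤ q.2 ∧ q.2 ≤ 0.52891 ∧
    0.33018 ≤ 3 * (1 - q.1) - 2 * q.2 ∧ 3 * (1 - q.1) - 2 * q.2 ≤ 0.52891 ∧
    0.077639 ≤ q.2 - 2 + 3 * q.1 ∧ q.2 - 2 + 3 * q.1 ≤ 0.21782}

/-!
Write `W = β₁ + 6φ − 3`. Since `β₂ = W − 3β₃`, `Y = 2W − 3β₃` and `3φ − 1 = W − β₃`, everything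
depends on `β₁` only through the increasing coordinate `v = β₃ / W`, which maps `I_φ` into
`(0, 1/3)`. With `κ = 27(1 − φ)/(3φ − 1)` one finds
`U / V = κ v²(1 − v)/(1 − 3v)` and `1 / V = 1 − (1 − 3v)²`, so a geometric sum gives
`E_{x,p} = κⁿ (v²(1 − v)/(1 − 3v))ⁿ (1 − 3v)² ∑_{i<p} V⁻ⁱ` with `n = x − 2p`. The sum is
nondecreasing in `v`. If `n ≥ 2`, the two factors `1 − 3v` cancel against denominators and the
rest increases. If `n = 1`, what remains is the quartic `v²(1 − v)(1 − 3v)`, whose maximum on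
`[0, 1/3]`, at `v = (3 − √3)/6`, corresponds to `β₁ = β₁*`.
-/

open Set

section Products

variable {α R : Type*} [Preorder α] {s : Set α}

lemma strictMonoOn_mul_of_monotoneOn [MulZeroClass R] [Preorder R] [PosMulMono R]
    [MulPosStrictMono R] {f g : α → R} (hf : StrictMonoOn f s) (hg : MonotoneOn g s)
    (hf₀ : ∀ x ∈ s, 0 ≤ f x) (hg₀ : ∀ x ∈ s, 0 < g x) :
    StrictMonoOn (fun x => f x * g x) s := fun _ ha _ hb hab =>
  mul_lt_mul (hf ha hb hab) (hg ha hb hab.le) (hg₀ _ ha) (hf₀ _ hb)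

lemma monotoneOn_geom_sum [Semiring R] [PartialOrder R] [IsOrderedRing R] {g : α → R}
    (hg : MonotoneOn g s) (hg₀ : ∀ x ∈ s, 0 ≤ g x) (p : ℕ) :
    MonotoneOn (fun x => ∑ i ∈ Finset.range p, g x ^ i) s := fun _ ha _ hb hab =>
  Finset.sum_le_sum fun i _ => pow_le_pow_left₀ (hg₀ _ ha) (hg ha hb hab) i

end Products

section Ratio

/-- The interval `I_φ` of those `β₁` for which `β₂` and `β₃` are positive. -/
abbrev betaInterval (φ : ℝ) : Set ℝ := Ioo (2 - 3 * φ) (3 * (1 - φ) / 2)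

/-- The point `β₁*` of `I_φ` at which `E_{3,1}` is maximal. -/
noncomputable abbrev critBeta (φ : ℝ) : ℝ := √3 - 3 * (√3 - 1) * φ

/-- The coordinate `v = β₃ / (β₁ + 6φ − 3)`, in terms of which `E_{x,p}` depends on `φ` only
through a constant factor. -/
noncomputable def betaRatio (φ t : ℝ) : ℝ := (t - 2 + 3 * φ) / (t + 6 * φ - 3)

/-- The value `(3 − √3)/6` of the coordinate `v` at `β₁*`: the smaller root of `6v² − 6v + 1`. -/
noncomputable def critRatio : ℝ := (3 - √3) / 6

variable {φ t : ℝ}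

lemma one_third_lt_of_mem_betaInterval (ht : t ∈ betaInterval φ) : 1 / 3 < φ := by
  linarith [ht.1, ht.2]

lemma betaRatio_denom_pos (ht : t ∈ betaInterval φ) : 0 < t + 6 * φ - 3 := by
  linarith [ht.1, one_third_lt_of_mem_betaInterval ht]

lemma one_sub_betaRatio (hW : t + 6 * φ - 3 ≠ 0) :
    1 - betaRatio φ t = (3 * φ - 1) / (t + 6 * φ - 3) := by
  rw [betaRatio, one_sub_div hW]
  ring

lemma one_sub_three_mul_betaRatio (hW : t + 6 * φ - 3 ≠ 0) :
    1 - 3 * betaRatio φ t = (3 * (1 - φ) - 2 * t) / (t + 6 * φ - 3) := by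
  rw [betaRatio, ← mul_div_assoc, one_sub_div hW]
  ring

lemma betaRatio_mem_Ioo (ht : t ∈ betaInterval φ) : betaRatio φ t ∈ Ioo 0 (1 / 3) := by
  have hW := betaRatio_denom_pos ht
  refine ⟨div_pos (by linarith [ht.1]) hW, ?_⟩
  rw [betaRatio, div_lt_iff₀ hW]
  linarith [ht.2]

lemma betaRatio_strictMonoOn (φ : ℝ) : StrictMonoOn (betaRatio φ) (betaInterval φ) := by
  intro a ha b hb hab
  have hφ := one_third_lt_of_mem_betaInterval ha
  suffices 1 - betaRatio φ b < 1 - betaRatio φ a by linarith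
  have hWa := betaRatio_denom_pos ha
  rw [one_sub_betaRatio hWa.ne', one_sub_betaRatio (betaRatio_denom_pos hb).ne']
  exact div_lt_div_of_pos_left (by linarith) hWa (by linarith)

lemma betaRatio_sub_critRatio (hW : t + 6 * φ - 3 ≠ 0) :
    betaRatio φ t - critRatio = (t - critBeta φ) * ((3 + √3) / (6 * (t + 6 * φ - 3))) := by
  have hsq : √3 ^ 2 = 3 := Real.sq_sqrt (by norm_num)
  rw [betaRatio, critRatio, div_sub_div _ _ hW (by norm_num), mul_div_assoc',
    div_eq_div_iff (by positivity) (by positivity)]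
  linear_combination 6 * (t + 6 * φ - 3) * (1 - 3 * φ) * hsq

lemma betaRatio_le_critRatio_iff (ht : t ∈ betaInterval φ) :
    betaRatio φ t ≤ critRatio ↔ t ≤ critBeta φ := by
  have hW := betaRatio_denom_pos ht
  rw [← not_lt, ← sub_pos, betaRatio_sub_critRatio hW.ne',
    mul_pos_iff_of_pos_right (by positivity), sub_pos, not_lt]

lemma critRatio_le_betaRatio_iff (ht : t ∈ betaInterval φ) :
    critRatio ≤ betaRatio φ t ↔ critBeta φ ≤ t := by
  have hW := betaRatio_denom_pos ht
  rw [← sub_nonneg, betaRatio_sub_critRatio hW.ne', mul_nonneg_iff_of_pos_right (by positivity),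
    sub_nonneg]

lemma mapsTo_betaRatio_inter_Iic (φ : ℝ) :
    MapsTo (betaRatio φ) (betaInterval φ ∩ Iic (critBeta φ)) (Ioc 0 critRatio) := fun _ ht =>
  ⟨(betaRatio_mem_Ioo ht.1).1, (betaRatio_le_critRatio_iff ht.1).2 ht.2⟩

lemma mapsTo_betaRatio_inter_Ici (φ : ℝ) :
    MapsTo (betaRatio φ) (betaInterval φ ∩ Ici (critBeta φ)) (Ico critRatio (1 / 3)) :=
  fun _ ht => ⟨(critRatio_le_betaRatio_iff ht.1).2 ht.2, (betaRatio_mem_Ioo ht.1).2⟩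

lemma critRatio_pos : 0 < critRatio := by
  have : √3 < 3 := (Real.sqrt_lt' (by norm_num)).2 (by norm_num)
  rw [critRatio]
  linarith

lemma critRatio_lt_one_third : critRatio < 1 / 3 := by
  have : 1 < √3 := (Real.lt_sqrt (by norm_num)).2 (by norm_num)
  rw [critRatio]
  linarith

end Ratio

section Quartic

/-- The quartic `v²(1 − v)(1 − 3v)`, which is `E_{3,1}` in the coordinate `v` up to a constant
factor. -/
def ratioQuartic (v : ℝ) : ℝ := v ^ 2 * (1 - v) * (1 - 3 * v)

lemma ratioQuartic_continuous : Continuous ratioQuartic := by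
  unfold ratioQuartic
  fun_prop

lemma deriv_ratioQuartic (v : ℝ) :
    deriv ratioQuartic v = 12 * v * ((v - critRatio) * (v - (1 - critRatio))) := by
  have hderiv : HasDerivAt ratioQuartic (2 * v * (1 - 6 * v + 6 * v ^ 2)) v := by
    refine (((hasDerivAt_pow 2 v).mul ((hasDerivAt_id v).const_sub 1)).mul
      (((hasDerivAt_id v).const_mul 3).const_sub 1)).congr_deriv ?_
    simp only [id, Pi.mul_apply]
    ring
  have hsq : √3 ^ 2 = 3 := Real.sq_sqrt (by norm_num)
  rw [hderiv.deriv, critRatio]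
  linear_combination (v / 3) * hsq

lemma ratioQuartic_strictMonoOn : StrictMonoOn ratioQuartic (Icc 0 critRatio) := by
  refine strictMonoOn_of_deriv_pos (convex_Icc _ _) ratioQuartic_continuous.continuousOn
    fun v hv => ?_
  obtain ⟨hv₀, hvc⟩ := interior_Icc.subset hv
  rw [deriv_ratioQuartic]
  have hroots := mul_pos_of_neg_of_neg (sub_neg.2 hvc)
    (show v - (1 - critRatio) < 0 by linarith [critRatio_lt_one_third])
  positivity

lemma ratioQuartic_strictAntiOn :
    StrictAntiOn ratioQuartic (Icc critRatio (1 - critRatio)) := by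
  refine strictAntiOn_of_deriv_neg (convex_Icc _ _) ratioQuartic_continuous.continuousOn
    fun v hv => ?_
  obtain ⟨hcv, hvc⟩ := interior_Icc.subset hv
  rw [deriv_ratioQuartic]
  exact mul_neg_of_pos_of_neg (by linarith [critRatio_pos])
    (mul_neg_of_pos_of_neg (sub_pos.2 hcv) (sub_neg.2 hvc))

end Quartic

section ReducedE

/-- The function `E_{x,p}` with `n = x − 2p`, expressed in the coordinate `v` and divided by its
constant factor `(27(1 − φ)/(3φ − 1))ⁿ`. -/
noncomputable def reducedE (n p : ℕ) (v : ℝ) : ℝ :=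
  (v ^ 2 * (1 - v) / (1 - 3 * v)) ^ n * (1 - (1 - (1 - 3 * v) ^ 2) ^ p)

lemma reducedE_eq_mul_geom_sum (n p : ℕ) (v : ℝ) :
    reducedE n p v = (v ^ 2 * (1 - v) / (1 - 3 * v)) ^ n * (1 - 3 * v) ^ 2 *
      ∑ i ∈ Finset.range p, (1 - (1 - 3 * v) ^ 2) ^ i := by
  rw [reducedE, ← mul_neg_geom_sum, sub_sub_cancel, mul_assoc]

lemma reducedE_strictMonoOn {n p : ℕ} (hp : p ≠ 0) {s : Set ℝ} (hs : s ⊆ Ioo 0 (1 / 3))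
    (hweight : StrictMonoOn
      (fun v : ℝ => (v ^ 2 * (1 - v) / (1 - 3 * v)) ^ n * (1 - 3 * v) ^ 2) s) :
    StrictMonoOn (reducedE n p) s := by
  have hbase : MonotoneOn (fun v : ℝ => 1 - (1 - 3 * v) ^ 2) s := fun a _ b hb hab =>
    sub_le_sub_left (pow_le_pow_left₀ (by linarith [(hs hb).2]) (by linarith) 2) 1
  have hbase₀ : ∀ v ∈ s, 0 ≤ 1 - (1 - 3 * v) ^ 2 := fun v hv => by
    nlinarith [(hs hv).1, (hs hv).2]
  refine (strictMonoOn_mul_of_monotoneOn hweight (monotoneOn_geom_sum hbase hbase₀ p)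
    (fun v hv => ?_) fun v hv => geom_sum_pos (hbase₀ v hv) hp).congr
    fun v _ => (reducedE_eq_mul_geom_sum n p v).symm
  have h₁ : 0 ≤ 1 - v := by linarith [(hs hv).2]
  have h₃ : 0 ≤ 1 - 3 * v := by linarith [(hs hv).2]
  positivity

lemma sq_mul_one_sub_pos {v : ℝ} (hv₀ : 0 < v) (hv₁ : v < 1) : 0 < v ^ 2 * (1 - v) :=
  mul_pos (pow_pos hv₀ 2) (sub_pos.2 hv₁)

lemma sq_mul_one_sub_lt {a b : ℝ} (ha : 0 ≤ a) (hab : a < b) (hb : b ≤ 2 / 3) :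
    a ^ 2 * (1 - a) < b ^ 2 * (1 - b) := by
  have : 0 < 2 / 3 - a := by linarith
  have : 0 ≤ 2 / 3 - b := by linarith
  have : 0 < b := ha.trans_lt hab
  have hfactor : b ^ 2 * (1 - b) - a ^ 2 * (1 - a) = (b - a) *
      (a * (2 / 3 - a) + b * (2 / 3 - b) + a * (2 / 3 - b) / 2 + b * (2 / 3 - a) / 2) := by
    ring
  rw [← sub_pos, hfactor]
  exact mul_pos (sub_pos.2 hab) (by positivity)

lemma sq_mul_one_sub_div_strictMonoOn :
    StrictMonoOn (fun v : ℝ => v ^ 2 * (1 - v) / (1 - 3 * v)) (Ioo 0 (1 / 3)) :=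
  fun a ha b hb hab => div_lt_div₀ (sq_mul_one_sub_lt ha.1.le hab (by linarith [hb.2]))
    (by linarith) (sq_mul_one_sub_pos hb.1 (by linarith [hb.2])).le (by linarith [hb.2])

lemma reducedE_strictMonoOn_Ioo {n p : ℕ} (hn : 2 ≤ n) (hp : p ≠ 0) :
    StrictMonoOn (reducedE n p) (Ioo 0 (1 / 3)) := by
  obtain ⟨m, rfl⟩ := Nat.exists_eq_add_of_le hn
  have hcubic_pos : ∀ v ∈ Ioo (0 : ℝ) (1 / 3), 0 < v ^ 2 * (1 - v) := fun v hv =>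
    sq_mul_one_sub_pos hv.1 (by linarith [hv.2])
  have hquot_pos : ∀ v ∈ Ioo (0 : ℝ) (1 / 3), 0 < v ^ 2 * (1 - v) / (1 - 3 * v) := fun v hv =>
    div_pos (hcubic_pos v hv) (by linarith [hv.2])
  have hsq : StrictMonoOn (fun v : ℝ => (v ^ 2 * (1 - v)) ^ 2) (Ioo 0 (1 / 3)) :=
    fun a ha b hb hab => pow_lt_pow_left₀
      (sq_mul_one_sub_lt ha.1.le hab (by linarith [hb.2])) (hcubic_pos a ha).le two_ne_zero
  have hpow : MonotoneOn (fun v : ℝ => (v ^ 2 * (1 - v) / (1 - 3 * v)) ^ m) (Ioo 0 (1 / 3)) :=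
    fun a ha b hb hab =>
      pow_le_pow_left₀ (hquot_pos a ha).le (sq_mul_one_sub_div_strictMonoOn.monotoneOn ha hb hab) m
  refine reducedE_strictMonoOn hp Subset.rfl ((strictMonoOn_mul_of_monotoneOn hsq hpow
    (fun v _ => sq_nonneg _) fun v hv => pow_pos (hquot_pos v hv) m).congr fun v hv => ?_)
  have : 1 - 3 * v ≠ 0 := by linarith [hv.2]
  dsimp only
  rw [pow_add, mul_right_comm, ← mul_pow _ (1 - 3 * v), div_mul_cancel₀ _ this]

lemma reducedE_one_strictMonoOn_Ioc {p : ℕ} (hp : p ≠ 0) :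
    StrictMonoOn (reducedE 1 p) (Ioc 0 critRatio) := by
  have hsub : Ioc 0 critRatio ⊆ Ioo 0 (1 / 3) := Ioc_subset_Ioo_right critRatio_lt_one_third
  refine reducedE_strictMonoOn hp hsub
    ((ratioQuartic_strictMonoOn.mono Ioc_subset_Icc_self).congr fun v hv => ?_)
  have : 1 - 3 * v ≠ 0 := by linarith [(hsub hv).2]
  simp only [ratioQuartic]
  field_simp

end ReducedE

section ChangeOfCoordinate

variable {φ t : ℝ}

lemma Vfun_eq_div (hY : 3 * φ - t ≠ 0) (hβ₃ : t - 2 + 3 * φ ≠ 0) :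
    Vfun φ t = (t + 6 * φ - 3) ^ 2 / (3 * (3 * φ - t) * (t - 2 + 3 * φ)) := by
  rw [Vfun, one_add_div (by simp [hY, hβ₃])]
  ring

lemma inv_Vfun (ht : t ∈ betaInterval φ) :
    (Vfun φ t)⁻¹ = 1 - (1 - 3 * betaRatio φ t) ^ 2 := by
  have hW := (betaRatio_denom_pos ht).ne'
  have hY : 3 * φ - t ≠ 0 := by linarith [ht.2, one_third_lt_of_mem_betaInterval ht]
  have hβ₃ : t - 2 + 3 * φ ≠ 0 := by linarith [ht.1]
  rw [Vfun_eq_div hY hβ₃, inv_div, one_sub_three_mul_betaRatio hW, div_pow,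
    one_sub_div (pow_ne_zero 2 hW)]
  ring

lemma Ufun_div_Vfun (ht : t ∈ betaInterval φ) :
    Ufun φ t / Vfun φ t = 27 * (1 - φ) / (3 * φ - 1) *
      (betaRatio φ t ^ 2 * (1 - betaRatio φ t) / (1 - 3 * betaRatio φ t)) := by
  have hW := (betaRatio_denom_pos ht).ne'
  have hs : 3 * φ - 1 ≠ 0 := by linarith [one_third_lt_of_mem_betaInterval ht]
  have hY : 3 * φ - t ≠ 0 := by linarith [ht.2, one_third_lt_of_mem_betaInterval ht]
  have hβ₃ : t - 2 + 3 * φ ≠ 0 := by linarith [ht.1]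
  have hβ₂ : 3 * (1 - φ) - 2 * t ≠ 0 := by linarith [ht.2]
  rw [Ufun, Vfun_eq_div hY hβ₃, one_sub_three_mul_betaRatio hW, one_sub_betaRatio hW, betaRatio]
  generalize t + 6 * φ - 3 = W, 3 * φ - 1 = s, 3 * φ - t = Y, 3 * (1 - φ) - 2 * t = β₂ at *
  field_simp
  ring

lemma E_eq_mul_reducedE (ht : t ∈ betaInterval φ) (n p : ℕ) :
    (Ufun φ t / Vfun φ t) ^ n * (1 - Vfun φ t ^ (-(p : ℤ))) =
      (27 * (1 - φ) / (3 * φ - 1)) ^ n * reducedE n p (betaRatio φ t) := by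
  rw [Ufun_div_Vfun ht, zpow_neg, zpow_natCast, ← inv_pow, inv_Vfun ht, mul_pow, mul_assoc,
    reducedE]

lemma E_three_one_eq_mul_ratioQuartic (ht : t ∈ betaInterval φ) :
    27 * (1 - φ) * (3 * (1 - φ) - 2 * t) * (t - 2 + 3 * φ) ^ 2 / (t + 6 * φ - 3) ^ 4 =
      27 * (1 - φ) / (3 * φ - 1) * ratioQuartic (betaRatio φ t) := by
  have hs : 3 * φ - 1 ≠ 0 := by linarith [one_third_lt_of_mem_betaInterval ht]
  have hW := (betaRatio_denom_pos ht).ne'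
  rw [ratioQuartic, one_sub_three_mul_betaRatio hW, one_sub_betaRatio hW, betaRatio]
  generalize t + 6 * φ - 3 = W, 3 * φ - 1 = s at *
  field_simp

lemma E_scale_pos (hφ : φ < 1) (ht : t ∈ betaInterval φ) :
    0 < 27 * (1 - φ) / (3 * φ - 1) :=
  div_pos (by linarith) (by linarith [one_third_lt_of_mem_betaInterval ht])

lemma E_strictMonoOn_of_reducedE (hφ : φ < 1) {n p : ℕ} {s u : Set ℝ} (hs : s ⊆ betaInterval φ)
    (hsu : MapsTo (betaRatio φ) s u) (hE : StrictMonoOn (reducedE n p) u) :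
    StrictMonoOn (fun t : ℝ => (Ufun φ t / Vfun φ t) ^ n * (1 - Vfun φ t ^ (-(p : ℤ)))) s := by
  intro a ha b hb hab
  simp only [E_eq_mul_reducedE (hs ha), E_eq_mul_reducedE (hs hb)]
  exact mul_lt_mul_of_pos_left
    (hE (hsu ha) (hsu hb) (betaRatio_strictMonoOn φ (hs ha) (hs hb) hab))
    (pow_pos (E_scale_pos hφ (hs ha)) n)

lemma E_three_one_strictMonoOn (hφ : φ < 1) :
    StrictMonoOn
      (fun t : ℝ => 27 * (1 - φ) * (3 * (1 - φ) - 2 * t) * (t - 2 + 3 * φ) ^ 2 /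
        (t + 6 * φ - 3) ^ 4)
      (betaInterval φ ∩ Iic (critBeta φ)) := by
  intro a ha b hb hab
  have hmaps := (mapsTo_betaRatio_inter_Iic φ).mono_right Ioc_subset_Icc_self
  simp only [E_three_one_eq_mul_ratioQuartic ha.1, E_three_one_eq_mul_ratioQuartic hb.1]
  exact mul_lt_mul_of_pos_left
    (ratioQuartic_strictMonoOn (hmaps ha) (hmaps hb) (betaRatio_strictMonoOn φ ha.1 hb.1 hab))
    (E_scale_pos hφ ha.1)

lemma E_three_one_strictAntiOn (hφ : φ < 1) :
    StrictAntiOn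
      (fun t : ℝ => 27 * (1 - φ) * (3 * (1 - φ) - 2 * t) * (t - 2 + 3 * φ) ^ 2 /
        (t + 6 * φ - 3) ^ 4)
      (betaInterval φ ∩ Ici (critBeta φ)) := by
  intro a ha b hb hab
  have hmaps := (mapsTo_betaRatio_inter_Ici φ).mono_right
    (show Ico critRatio (1 / 3) ⊆ Icc critRatio (1 - critRatio) from
      Ico_subset_Icc_self.trans (Icc_subset_Icc_right (by linarith [critRatio_lt_one_third])))
  simp only [E_three_one_eq_mul_ratioQuartic ha.1, E_three_one_eq_mul_ratioQuartic hb.1]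
  exact mul_lt_mul_of_pos_left
    (ratioQuartic_strictAntiOn (hmaps ha) (hmaps hb) (betaRatio_strictMonoOn φ ha.1 hb.1 hab))
    (E_scale_pos hφ ha.1)

end ChangeOfCoordinate

theorem E_monotone_in_beta_fixed_phi_general (φ : ℝ) (hφ : φ < 1) :
    (∀ p x : ℕ, 1 ≤ p → 2 * p + 2 ≤ x →
        StrictMonoOn
          (fun t : ℝ => (Ufun φ t / Vfun φ t) ^ (x - 2 * p) * (1 - (Vfun φ t) ^ (-(p : ℤ))))
          (betaInterval φ)) ∧
      StrictMonoOn
        (fun t : ℝ => 27 * (1 - φ) * (3 * (1 - φ) - 2 * t) * (t - 2 + 3 * φ) ^ 2 /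
          (t + 6 * φ - 3) ^ 4)
        (betaInterval φ ∩ Iic (critBeta φ)) ∧
      StrictAntiOn
        (fun t : ℝ => 27 * (1 - φ) * (3 * (1 - φ) - 2 * t) * (t - 2 + 3 * φ) ^ 2 /
          (t + 6 * φ - 3) ^ 4)
        (betaInterval φ ∩ Ici (critBeta φ)) ∧
      ∀ p x : ℕ, 1 ≤ p → x = 2 * p + 1 →
        StrictMonoOn
          (fun t : ℝ => (Ufun φ t / Vfun φ t) ^ (x - 2 * p) * (1 - (Vfun φ t) ^ (-(p : ℤ))))
          (betaInterval φ ∩ Iic (critBeta φ)) := by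
  refine ⟨fun p x hp hx => ?_, E_three_one_strictMonoOn hφ, E_three_one_strictAntiOn hφ,
    fun p x hp hx => ?_⟩
  · exact E_strictMonoOn_of_reducedE hφ Subset.rfl (fun _ => betaRatio_mem_Ioo)
      (reducedE_strictMonoOn_Ioo (by lia) (by lia))
  · rw [show x - 2 * p = 1 by lia]
    exact E_strictMonoOn_of_reducedE hφ inter_subset_left (mapsTo_betaRatio_inter_Iic φ)
      (reducedE_one_strictMonoOn_Ioc (by lia))

/-- monotonicity of `E_{x,p}(β₁) = (U/V)^{x−2p}(1 − V^{−p})` at fixed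
`φ ∈ [0.525245, 0.619063]` on `I_φ = (2 − 3φ, 3(1 − φ)/2)`: (i) strictly increasing for
`x ≥ 2p + 2`; (ii) with `β₁* = √3 − 3(√3 − 1)φ`, the function
`E_{3,1}(β₁) = 27(1 − φ)β₂β₃²/(β₁ + 6φ − 3)⁴` is strictly increasing on
`I_φ ∩ (−∞, β₁*]` and strictly decreasing on `I_φ ∩ [β₁*, ∞)`; consequently `E_{x,p}`
with `x = 2p + 1` is strictly increasing on `I_φ ∩ (−∞, β₁*]`. -/
theorem E_monotone_in_beta_fixed_phi (φ : ℝ) (hφ1 : 0.525245 ≤ φ) (hφ2 : φ ≤ 0.619063) :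
    (∀ p x : ℕ, 1 ≤ p → 2 * p + 2 ≤ x →
        StrictMonoOn
          (fun t : ℝ => (Ufun φ t / Vfun φ t) ^ (x - 2 * p) * (1 - (Vfun φ t) ^ (-(p : ℤ))))
          (Set.Ioo (2 - 3 * φ) (3 * (1 - φ) / 2))) ∧
      StrictMonoOn
        (fun t : ℝ => 27 * (1 - φ) * (3 * (1 - φ) - 2 * t) * (t - 2 + 3 * φ) ^ 2 /
          (t + 6 * φ - 3) ^ 4)
        (Set.Ioo (2 - 3 * φ) (3 * (1 - φ) / 2) ∩
          Set.Iic (Real.sqrt 3 - 3 * (Real.sqrt 3 - 1) * φ)) ∧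
      StrictAntiOn
        (fun t : ℝ => 27 * (1 - φ) * (3 * (1 - φ) - 2 * t) * (t - 2 + 3 * φ) ^ 2 /
          (t + 6 * φ - 3) ^ 4)
        (Set.Ioo (2 - 3 * φ) (3 * (1 - φ) / 2) ∩
          Set.Ici (Real.sqrt 3 - 3 * (Real.sqrt 3 - 1) * φ)) ∧
      ∀ p x : ℕ, 1 ≤ p → x = 2 * p + 1 →
        StrictMonoOn
          (fun t : ℝ => (Ufun φ t / Vfun φ t) ^ (x - 2 * p) * (1 - (Vfun φ t) ^ (-(p : ℤ))))
          (Set.Ioo (2 - 3 * φ) (3 * (1 - φ) / 2) ∩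
            Set.Iic (Real.sqrt 3 - 3 * (Real.sqrt 3 - 1) * φ)) := by
  exact E_monotone_in_beta_fixed_phi_general φ (by linarith)
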